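/- arXiv:1305.4785 — 3 statements merged into one kernel-verified Lean document; each statement's English description precedes it below -/
import Mathlib

section
/- Let c₂₂, c₃₃ ∈ ℝ with 9c₂₂² − 6c₃₃ > 0, and set s = √(9c₂₂² − 6c₃₃). Define h : ℝ → ℝ by h(u) = (2/s)·arctan(s·u/2). Then h(0) = 0, h′(0) = 1, h″(0) = 0, h′(u) > 0 for all u ∈ ℝ, and for every u ∈ ℝ: (1/3)h‴(u) − (h″(u))²/(2h′(u)) + ((3c₂₂² − 2c₃₃)/2)·(h′(u))³ = 0. -/
theorem hasDerivAt_two_div_mul_arctan {s : ℝ} (hs : s ≠ 0) (u : ℝ) :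
    HasDerivAt (fun u : ℝ => (2 / s) * Real.arctan (s * u / 2))
      (1 + s ^ 2 / 4 * u ^ 2)⁻¹ u := by
  have hlin : HasDerivAt (fun u : ℝ => s * u / 2) (s * 1 / 2) u :=
    ((hasDerivAt_id u).const_mul s).div_const 2
  refine (hlin.arctan.const_mul (2 / s)).congr_deriv ?_
  field_simp
  ring

theorem hasDerivAt_one_add_mul_sq (a u : ℝ) :
    HasDerivAt (fun u : ℝ => 1 + a * u ^ 2) (2 * a * u) u := by
  refine (((hasDerivAt_pow 2 u).const_mul a).const_add 1).congr_deriv ?_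
  push_cast
  ring

theorem hasDerivAt_inv_one_add_mul_sq {a u : ℝ} (hD : 1 + a * u ^ 2 ≠ 0) :
    HasDerivAt (fun u : ℝ => (1 + a * u ^ 2)⁻¹) (-(2 * a * u) / (1 + a * u ^ 2) ^ 2) u :=
  (hasDerivAt_one_add_mul_sq a u).fun_inv hD

theorem hasDerivAt_neg_mul_div_one_add_mul_sq_sq {a u : ℝ} (hD : 1 + a * u ^ 2 ≠ 0) :
    HasDerivAt (fun u : ℝ => -(2 * a * u) / (1 + a * u ^ 2) ^ 2)
      ((6 * a ^ 2 * u ^ 2 - 2 * a) / (1 + a * u ^ 2) ^ 3) u := by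
  have hnum : HasDerivAt (fun u : ℝ => -(2 * a * u)) (-(2 * a * 1)) u :=
    ((hasDerivAt_id u).const_mul (2 * a)).neg
  have hden := (hasDerivAt_one_add_mul_sq a u).fun_pow 2
  refine (hnum.fun_div hden (pow_ne_zero 2 hD)).congr_deriv ?_
  field_simp
  push_cast
  ring

/-- Solution of the normalisation ODE for `c₂₃ = 0`:
`h(u) = (2/s) arctan(su/2)` with `s = √(9c₂₂² − 6c₃₃)`. -/
theorem stmt_4 (c22 c33 : ℝ) (hpos : 9 * c22 ^ 2 - 6 * c33 > 0)
    (s : ℝ) (hs : s = Real.sqrt (9 * c22 ^ 2 - 6 * c33))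
    (h : ℝ → ℝ) (hh : ∀ u : ℝ, h u = (2 / s) * Real.arctan (s * u / 2)) :
    h 0 = 0 ∧ deriv h 0 = 1 ∧ iteratedDeriv 2 h 0 = 0 ∧
    (∀ u : ℝ, 0 < deriv h u) ∧
    ∀ u : ℝ,
      (1 / 3) * iteratedDeriv 3 h u - (iteratedDeriv 2 h u) ^ 2 / (2 * deriv h u)
        + ((3 * c22 ^ 2 - 2 * c33) / 2) * (deriv h u) ^ 3 = 0 := by
  have hs0 : 0 < s := hs ▸ Real.sqrt_pos.mpr hpos
  have hs2 : s ^ 2 = 9 * c22 ^ 2 - 6 * c33 := hs ▸ Real.sq_sqrt hpos.le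
  have hD (u : ℝ) : 0 < 1 + s ^ 2 / 4 * u ^ 2 := by positivity
  have hd1 : deriv h = fun u => (1 + s ^ 2 / 4 * u ^ 2)⁻¹ := by
    rw [funext hh]
    exact funext fun u => (hasDerivAt_two_div_mul_arctan hs0.ne' u).deriv
  have hd2 : iteratedDeriv 2 h =
      fun u => -(2 * (s ^ 2 / 4) * u) / (1 + s ^ 2 / 4 * u ^ 2) ^ 2 := by
    rw [iteratedDeriv_succ, iteratedDeriv_one, hd1]
    exact funext fun u => (hasDerivAt_inv_one_add_mul_sq (hD u).ne').deriv
  have hd3 : iteratedDeriv 3 h = fun u =>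
      (6 * (s ^ 2 / 4) ^ 2 * u ^ 2 - 2 * (s ^ 2 / 4)) / (1 + s ^ 2 / 4 * u ^ 2) ^ 3 := by
    rw [iteratedDeriv_succ, hd2]
    exact funext fun u => (hasDerivAt_neg_mul_div_one_add_mul_sq_sq (hD u).ne').deriv
  refine ⟨by simp [hh], by simp [hd1], by simp [hd2], fun u => ?_, fun u => ?_⟩
  · simpa only [hd1] using inv_pos.mpr (hD u)
  · have hc : (3 * c22 ^ 2 - 2 * c33) / 2 = 2 / 3 * (s ^ 2 / 4) := by
      rw [hs2]
      ring
    have hDu := (hD u).ne'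
    simp only [hd1, hd2, hd3, hc]
    generalize s ^ 2 / 4 = a at hDu ⊢
    field_simp
    ring
end

section
/- Define f : (−π/2, π/2) → ℝ by f(x) = −2·log(cos x). Then for every x ∈ (−π/2, π/2): f⁗(x) − 3·f′(x)·f‴(x) + 2·(f′(x))²·f″(x) − (f″(x))² = 0. -/
theorem Set.EqOn.iteratedDeriv_succ_of_hasDerivAt {f g g' : ℝ → ℝ} {s : Set ℝ} {n : ℕ}
    (hs : IsOpen s) (h : Set.EqOn (iteratedDeriv n f) g s)
    (hg : ∀ x ∈ s, HasDerivAt g (g' x) x) :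
    Set.EqOn (iteratedDeriv (n + 1) f) g' s := by
  intro x hx
  rw [iteratedDeriv_succ, (h.eventuallyEq_of_mem (hs.mem_nhds hx)).deriv_eq]
  exact (hg x hx).deriv

theorem Real.hasDerivAt_tan_one_add_sq {x : ℝ} (h : Real.cos x ≠ 0) :
    HasDerivAt Real.tan (1 + Real.tan x ^ 2) x := by
  convert Real.hasDerivAt_tan h using 1
  rw [← Real.inv_one_add_tan_sq h, one_div, inv_inv]

/-- `f(x) = −2 log cos x` solves the tube zero-curvature equation
`f⁗ − 3f′f‴ + 2(f′)²f″ − (f″)² = 0` on `(−π/2, π/2)`. -/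
theorem stmt_17 (f : ℝ → ℝ) (hf : ∀ x : ℝ, f x = -2 * Real.log (Real.cos x)) :
    ∀ x ∈ Set.Ioo (-(Real.pi / 2)) (Real.pi / 2),
      iteratedDeriv 4 f x - 3 * deriv f x * iteratedDeriv 3 f x
        + 2 * (deriv f x) ^ 2 * iteratedDeriv 2 f x - (iteratedDeriv 2 f x) ^ 2 = 0 := by
  have hcos : ∀ x ∈ Set.Ioo (-(Real.pi / 2)) (Real.pi / 2), Real.cos x ≠ 0 :=
    fun x hx => (Real.cos_pos_of_mem_Ioo hx).ne'
  have htan := fun x hx => Real.hasDerivAt_tan_one_add_sq (hcos x hx)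
  have h₀ : Set.EqOn (iteratedDeriv 0 f) (fun x => -2 * Real.log (Real.cos x))
      (Set.Ioo (-(Real.pi / 2)) (Real.pi / 2)) := fun x _ => by
    rw [iteratedDeriv_zero, hf]
  have h₁ := h₀.iteratedDeriv_succ_of_hasDerivAt (g' := fun x => 2 * Real.tan x) isOpen_Ioo
    fun x hx => by
      refine (((Real.hasDerivAt_cos x).log (hcos x hx)).const_mul (-2)).congr_deriv ?_
      rw [Real.tan_eq_sin_div_cos]
      ring
  have h₂ := h₁.iteratedDeriv_succ_of_hasDerivAt (g' := fun x => 2 * (1 + Real.tan x ^ 2))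
    isOpen_Ioo fun x hx => (htan x hx).const_mul 2
  have h₃ := h₂.iteratedDeriv_succ_of_hasDerivAt
    (g' := fun x => 4 * Real.tan x * (1 + Real.tan x ^ 2)) isOpen_Ioo fun x hx => by
      refine ((((htan x hx).pow 2).const_add 1).const_mul 2).congr_deriv ?_
      ring
  have h₄ := h₃.iteratedDeriv_succ_of_hasDerivAt
    (g' := fun x => 4 * (1 + Real.tan x ^ 2) * (1 + 3 * Real.tan x ^ 2)) isOpen_Ioo
    fun x hx => by
      refine (((htan x hx).const_mul 4).mul (((htan x hx).pow 2).const_add 1)).congr_deriv ?_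
      simp only [Pi.pow_apply]
      ring
  intro x hx
  rw [← iteratedDeriv_one, h₄ hx, h₃ hx, h₂ hx, h₁ hx]
  ring
end

section
/- Define f : ℝ → ℝ by f(x) = −2·log(cosh x). Then for every x ∈ ℝ: f⁗(x) − 3·f′(x)·f‴(x) + 2·(f′(x))²·f″(x) − (f″(x))² = 0. -/
theorem hasDerivAt_tanh_one_sub_sq (x : ℝ) :
    HasDerivAt Real.tanh (1 - Real.tanh x ^ 2) x := by
  have hc : Real.cosh x ≠ 0 := (Real.cosh_pos x).ne'
  have h := (Real.hasDerivAt_sinh x).div (Real.hasDerivAt_cosh x) hc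
  have he : Real.tanh = Real.sinh / Real.cosh := funext Real.tanh_eq_sinh_div_cosh
  rw [Real.tanh_eq_sinh_div_cosh, he]
  refine h.congr_deriv ?_
  field_simp

theorem hasDerivAt_log_cosh (x : ℝ) :
    HasDerivAt (fun y => Real.log (Real.cosh y)) (Real.tanh x) x := by
  rw [Real.tanh_eq_sinh_div_cosh]
  exact (Real.hasDerivAt_cosh x).log (Real.cosh_pos x).ne'

/-- `f(x) = −2 log cosh x` solves the tube zero-curvature equation
`f⁗ − 3f′f‴ + 2(f′)²f″ − (f″)² = 0` on `ℝ`. -/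
theorem stmt_18 (f : ℝ → ℝ) (hf : ∀ x : ℝ, f x = -2 * Real.log (Real.cosh x)) :
    ∀ x : ℝ,
      iteratedDeriv 4 f x - 3 * deriv f x * iteratedDeriv 3 f x
        + 2 * (deriv f x) ^ 2 * iteratedDeriv 2 f x - (iteratedDeriv 2 f x) ^ 2 = 0 := by
  have d1 : deriv f = fun x => -2 * Real.tanh x := by
    rw [funext hf]
    exact funext fun x => ((hasDerivAt_log_cosh x).const_mul (-2)).deriv
  have d2 : iteratedDeriv 2 f = fun x => -2 * (1 - Real.tanh x ^ 2) := by
    rw [iteratedDeriv_succ, iteratedDeriv_one, d1]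
    exact funext fun x => ((hasDerivAt_tanh_one_sub_sq x).const_mul (-2)).deriv
  have d3 : iteratedDeriv 3 f = fun x => 4 * (Real.tanh x - Real.tanh x ^ 3) := by
    rw [iteratedDeriv_succ, d2]
    funext x
    rw [((((hasDerivAt_tanh_one_sub_sq x).fun_pow 2).const_sub 1).const_mul (-2)).deriv]
    push_cast
    ring
  have d4 : iteratedDeriv 4 f =
      fun x => 4 * (1 - 3 * Real.tanh x ^ 2) * (1 - Real.tanh x ^ 2) := by
    rw [iteratedDeriv_succ, d3]
    funext x
    have h := hasDerivAt_tanh_one_sub_sq x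
    rw [((h.fun_sub (h.fun_pow 3)).const_mul 4).deriv]
    push_cast
    ring
  intro x
  rw [d4, d3, d2, d1]
  ring
end
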